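/- Let N be a normal subgroup of SL_n(ℤ) for n ≥ 3. Then either N is contained in the center of SL_n(ℤ) (hence N is finite, of order dividing 2), or the quotient SL_n(ℤ)/N is finite. -/

import Mathlib

open Matrix

/-- Underlying matrix. -/
def Matrix.SpecialLinearGroup.mat {ι : Type*} [Fintype ι] [DecidableEq ι]
    (g : Matrix.SpecialLinearGroup ι ℤ) : Matrix ι ι ℤ := (g : Matrix ι ι ℤ)

namespace SLNormal

variable {ι : Type*} [Fintype ι] [DecidableEq ι]

lemma mat_inj {g h : SpecialLinearGroup ι ℤ} (e : g.mat = h.mat) : g = h := Subtype.ext e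

@[simp] lemma mat_mul (g h : SpecialLinearGroup ι ℤ) : (g * h).mat = g.mat * h.mat :=
  Matrix.SpecialLinearGroup.coe_mul g h

@[simp] lemma mat_one : (1 : SpecialLinearGroup ι ℤ).mat = 1 :=
  Matrix.SpecialLinearGroup.coe_one

/-- Constructor. -/
def mkSL (M : Matrix ι ι ℤ) (h : M.det = 1) : SpecialLinearGroup ι ℤ := ⟨M, h⟩

lemma mat_mkSL (M : Matrix ι ι ℤ) (h : M.det = 1) : (mkSL M h).mat = M := rfl

lemma det_mat (g : SpecialLinearGroup ι ℤ) : g.mat.det = 1 := g.2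

/-- The generalized transvection `1 + x yᵀ` (for `y ⬝ x = 0`). -/
noncomputable def TT (x y : ι → ℤ) : SpecialLinearGroup ι ℤ :=
  if h : y ⬝ᵥ x = 0 then mkSL (1 + vecMulVec x y) (by
    rw [vecMulVec_eq Unit, det_one_add_replicateCol_mul_replicateRow, h, add_zero]) else 1

lemma TT_coe {x y : ι → ℤ} (h : y ⬝ᵥ x = 0) : (TT x y).mat = 1 + vecMulVec x y := by
  rw [TT, dif_pos h, mat_mkSL]

lemma vecMul_TT {x y : ι → ℤ} (h : y ⬝ᵥ x = 0) (v : ι → ℤ) :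
    v ᵥ* (TT x y).mat = v + (v ⬝ᵥ x) • y := by
  rw [TT_coe h, vecMul_add, vecMul_one, vecMul_vecMulVec]

lemma TT_mulVec {x y : ι → ℤ} (h : y ⬝ᵥ x = 0) (v : ι → ℤ) :
    (TT x y).mat *ᵥ v = v + (y ⬝ᵥ v) • x := by
  rw [TT_coe h, add_mulVec, one_mulVec, vecMulVec_mulVec]
  simp

lemma TT_zero_left (y : ι → ℤ) : TT 0 y = 1 := by
  apply mat_inj; rw [TT_coe (by simp)]; simp

lemma TT_zero_right (x : ι → ℤ) : TT x 0 = 1 := by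
  apply mat_inj; rw [TT_coe (by simp)]; simp

lemma TT_add_left {x x' y : ι → ℤ} (h : y ⬝ᵥ x = 0) (h' : y ⬝ᵥ x' = 0) :
    TT (x + x') y = TT x y * TT x' y := by
  apply mat_inj
  rw [mat_mul, TT_coe h, TT_coe h', TT_coe (by simp [h, h'])]
  rw [add_vecMulVec, mul_add, mul_one, add_mul, one_mul, vecMulVec_mul_vecMulVec, h']
  simp [add_assoc]

lemma TT_add_right {x y y' : ι → ℤ} (h : y ⬝ᵥ x = 0) (h' : y' ⬝ᵥ x = 0) :
    TT x (y + y') = TT x y * TT x y' := by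
  apply mat_inj
  rw [mat_mul, TT_coe h, TT_coe h', TT_coe (by simp [h, h'])]
  rw [vecMulVec_add, mul_add, mul_one, add_mul, one_mul, vecMulVec_mul_vecMulVec, h]
  simp [add_assoc]

lemma TT_neg_left {x y : ι → ℤ} (h : y ⬝ᵥ x = 0) : TT (-x) y = (TT x y)⁻¹ := by
  rw [eq_inv_iff_mul_eq_one, ← TT_add_left (by simp [h]) h, neg_add_cancel, TT_zero_left]

lemma TT_neg_right {x y : ι → ℤ} (h : y ⬝ᵥ x = 0) : TT x (-y) = (TT x y)⁻¹ := by
  rw [eq_inv_iff_mul_eq_one, ← TT_add_right (by simp [h]) h, neg_add_cancel, TT_zero_right]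

lemma TT_smul_comm (c : ℤ) (x y : ι → ℤ) : TT (c • x) y = TT x (c • y) := by
  by_cases hc : c = 0
  · subst hc; simp [TT_zero_left, TT_zero_right]
  by_cases h : y ⬝ᵥ x = 0
  · apply mat_inj
    rw [TT_coe (by rw [dotProduct_smul, h, smul_zero]), TT_coe (by rw [smul_dotProduct, h, smul_zero]),
      smul_vecMulVec, vecMulVec_smul]
  · have h1 : ¬ (y ⬝ᵥ (c • x) = 0) := by rw [dotProduct_smul]; simp [h, hc]
    have h2 : ¬ ((c • y) ⬝ᵥ x = 0) := by rw [smul_dotProduct]; simp [h, hc]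
    rw [TT, TT, dif_neg h1, dif_neg h2]

lemma inv_coe_mul (g : SpecialLinearGroup ι ℤ) : (g⁻¹).mat * g.mat = 1 := by
  rw [← mat_mul]; simp

lemma mul_inv_coe (g : SpecialLinearGroup ι ℤ) : g.mat * (g⁻¹).mat = 1 := by
  rw [← mat_mul]; simp

lemma TT_conj (g : SpecialLinearGroup ι ℤ) {x y : ι → ℤ} (h : y ⬝ᵥ x = 0) :
    g * TT x y * g⁻¹ = TT (g.mat *ᵥ x) (y ᵥ* (g⁻¹).mat) := by
  apply mat_inj
  rw [mat_mul, mat_mul, TT_coe h, TT_coe]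
  · rw [mul_add, add_mul, mul_one, mul_inv_coe, mul_vecMulVec, vecMulVec_mul]
  · rw [← dotProduct_mulVec, mulVec_mulVec, inv_coe_mul, one_mulVec, h]

/-- for fixed `y`, the `x` with `1 + x yᵀ ∈ K`. -/
noncomputable def XX (K : Subgroup (SpecialLinearGroup ι ℤ)) (y : ι → ℤ) : AddSubgroup (ι → ℤ) where
  carrier := {x | y ⬝ᵥ x = 0 ∧ TT x y ∈ K}
  zero_mem' := by simp [TT_zero_left]
  add_mem' := by
    rintro a b ⟨h1, h2⟩ ⟨h3, h4⟩
    exact ⟨by simp [h1, h3], by rw [TT_add_left h1 h3]; exact mul_mem h2 h4⟩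
  neg_mem' := by
    rintro a ⟨h1, h2⟩
    exact ⟨by simp [h1], by rw [TT_neg_left h1]; exact inv_mem h2⟩

/-- for fixed `x`, the `y` with `1 + x yᵀ ∈ K`. -/
noncomputable def YY (K : Subgroup (SpecialLinearGroup ι ℤ)) (x : ι → ℤ) : AddSubgroup (ι → ℤ) where
  carrier := {y | y ⬝ᵥ x = 0 ∧ TT x y ∈ K}
  zero_mem' := by simp [TT_zero_right]
  add_mem' := by
    rintro a b ⟨h1, h2⟩ ⟨h3, h4⟩
    exact ⟨by simp [h1, h3], by rw [TT_add_right h1 h3]; exact mul_mem h2 h4⟩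
  neg_mem' := by
    rintro a ⟨h1, h2⟩
    exact ⟨by simp [h1], by rw [TT_neg_right h1]; exact inv_mem h2⟩

lemma mem_XX {K : Subgroup (SpecialLinearGroup ι ℤ)} {x y : ι → ℤ} :
    x ∈ XX K y ↔ y ⬝ᵥ x = 0 ∧ TT x y ∈ K := Iff.rfl
lemma mem_YY {K : Subgroup (SpecialLinearGroup ι ℤ)} {x y : ι → ℤ} :
    y ∈ YY K x ↔ y ⬝ᵥ x = 0 ∧ TT x y ∈ K := Iff.rfl

/-- Elementary matrix. -/
noncomputable def E (i j : ι) (c : ℤ) : SpecialLinearGroup ι ℤ :=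
  TT (c • Pi.single i 1) (Pi.single j 1)

lemma E_orth {i j : ι} (h : i ≠ j) (c : ℤ) :
    (Pi.single j 1 : ι → ℤ) ⬝ᵥ (c • Pi.single i 1 : ι → ℤ) = 0 := by
  rw [dotProduct_smul]; simp [h]

lemma E_coe {i j : ι} (h : i ≠ j) (c : ℤ) : (E i j c).mat = transvection i j c := by
  rw [E, TT_coe (E_orth h c), transvection, smul_vecMulVec, ← single_eq_single_vecMulVec_single]
  simp

lemma mem_of_E_left {K : Subgroup (SpecialLinearGroup ι ℤ)} {m : ℤ} {p : ι}
    (hK : ∀ i, i ≠ p → ∀ k, m ∣ k → E i p k ∈ K) (x : ι → ℤ) (hx : x p = 0)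
    (hm : ∀ i, m ∣ x i) : TT x (Pi.single p 1) ∈ K := by
  have : x ∈ XX K (Pi.single p 1) := by
    rw [pi_eq_sum_univ' x]
    refine sum_mem fun i _ => ?_
    by_cases hi : i = p
    · subst hi; rw [hx, zero_smul]; exact zero_mem _
    · exact ⟨E_orth hi _, hK i hi _ (hm i)⟩
  exact this.2

lemma mem_of_E_right {K : Subgroup (SpecialLinearGroup ι ℤ)} {m : ℤ} {p : ι}
    (hK : ∀ i, i ≠ p → ∀ k, m ∣ k → E p i k ∈ K) (x : ι → ℤ) (hx : x p = 0)
    (hm : ∀ i, m ∣ x i) : TT (Pi.single p 1) x ∈ K := by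
  have : x ∈ YY K (Pi.single p 1) := by
    rw [pi_eq_sum_univ' x]
    refine sum_mem fun i _ => ?_
    by_cases hi : i = p
    · subst hi; rw [hx, zero_smul]; exact zero_mem _
    · refine ⟨by rw [smul_dotProduct]; simp [Ne.symm hi], ?_⟩
      rw [← TT_smul_comm]
      exact hK i hi _ (hm i)
  exact this.2

open scoped commutatorElement in
lemma E_comm {i l j : ι} (hil : i ≠ l) (hlj : l ≠ j) (hij : i ≠ j) (k : ℤ) :
    ⁅E i l k, E l j 1⁆ = E i j k := by
  rw [commutatorElement_def, mul_inv_eq_iff_eq_mul, mul_inv_eq_iff_eq_mul]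
  apply mat_inj
  simp only [mat_mul, E_coe hil, E_coe hlj, E_coe hij, transvection]
  simp [mul_add, add_mul, hlj.symm, hij.symm]
  abel

/-- Subgroup generated by elementary matrices with indices in `T`. -/
noncomputable def EE (T : Finset ι) : Subgroup (SpecialLinearGroup ι ℤ) :=
  Subgroup.closure {g | ∃ i ∈ T, ∃ j ∈ T, ∃ c : ℤ, i ≠ j ∧ g = E i j c}

lemma E_mem {T : Finset ι} {i j : ι} (hi : i ∈ T) (hj : j ∈ T) (hij : i ≠ j) (c : ℤ) :
    E i j c ∈ EE T := Subgroup.subset_closure ⟨i, hi, j, hj, c, hij, rfl⟩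

lemma vecMul_E {i j : ι} (hij : i ≠ j) (c : ℤ) (v : ι → ℤ) :
    v ᵥ* (E i j c).mat = Function.update v j (v j + c * v i) := by
  rw [E, vecMul_TT (E_orth hij c), dotProduct_smul]
  ext k
  by_cases hk : k = j
  · subst hk; simp [mul_comm]
  · simp [hk]

lemma EE_vecMul_single {T : Finset ι} {p : ι} (hp : p ∉ T) {g : SpecialLinearGroup ι ℤ}
    (hg : g ∈ EE T) : (Pi.single p 1 : ι → ℤ) ᵥ* g.mat = Pi.single p 1 := by
  induction hg using Subgroup.closure_induction with
  | mem x hx =>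
    obtain ⟨i, hi, j, hj, c, hij, rfl⟩ := hx
    have h1 : i ≠ p := fun h => hp (h ▸ hi)
    rw [vecMul_E hij]
    simp [h1]
  | one => simp
  | mul x y _ _ hx hy => rw [mat_mul, ← vecMul_vecMul, hx, hy]
  | inv x _ hx =>
    conv_lhs => rw [← hx]
    rw [vecMul_vecMul, mul_inv_coe, vecMul_one]

lemma E_mulVec {i j : ι} (hij : i ≠ j) (c : ℤ) (v : ι → ℤ) :
    (E i j c).mat *ᵥ v = Function.update v i (v i + c * v j) := by
  rw [E, TT_mulVec (E_orth hij c)]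
  ext k
  by_cases hk : k = i
  · subst hk; simp [mul_comm]
  · simp [hk]

lemma EE_mulVec_single {T : Finset ι} {p : ι} (hp : p ∉ T) {g : SpecialLinearGroup ι ℤ}
    (hg : g ∈ EE T) : g.mat *ᵥ (Pi.single p 1 : ι → ℤ) = Pi.single p 1 := by
  induction hg using Subgroup.closure_induction with
  | mem x hx =>
    obtain ⟨i, hi, j, hj, c, hij, rfl⟩ := hx
    have h1 : j ≠ p := fun h => hp (h ▸ hj)
    rw [E_mulVec hij]
    simp [h1]
  | one => rw [mat_one, one_mulVec]
  | mul x y _ _ hx hy => rw [mat_mul, ← mulVec_mulVec, hy, hx]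
  | inv x _ hx =>
    conv_lhs => rw [← hx]
    rw [mulVec_mulVec, inv_coe_mul, one_mulVec]

lemma EE_swap {T : Finset ι} {p q : ι} (hp : p ∈ T) (hq : q ∈ T) (hpq : p ≠ q) :
    ∃ g ∈ EE T, ∀ v : ι → ℤ, (v ᵥ* g.mat) p = v q ∧ (v ᵥ* g.mat) q = - v p ∧
      ∀ j, j ≠ p → j ≠ q → (v ᵥ* g.mat) j = v j := by
  refine ⟨E q p 1 * E p q (-1) * E q p 1, mul_mem (mul_mem (E_mem hq hp hpq.symm _)
    (E_mem hp hq hpq _)) (E_mem hq hp hpq.symm _), fun v => ?_⟩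
  simp only [mat_mul, ← vecMul_vecMul, vecMul_E hpq, vecMul_E hpq.symm]
  refine ⟨?_, ?_, fun j h1 h2 => ?_⟩
  · simp [hpq, hpq.symm]
  · simp [hpq, hpq.symm]
  · simp [h1, h2]

lemma EE_euclid {T : Finset ι} {p q : ι} (hp : p ∈ T) (hq : q ∈ T) (hpq : p ≠ q) (n : ℕ) :
    ∀ v : ι → ℤ, (v q).natAbs ≤ n → ∃ g ∈ EE T, 0 ≤ (v ᵥ* g.mat) p ∧ (v ᵥ* g.mat) q = 0 ∧
      ∀ j, j ≠ p → j ≠ q → (v ᵥ* g.mat) j = v j := by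
  obtain ⟨s, hs, hs'⟩ := EE_swap hp hq hpq
  induction n with
  | zero =>
    intro v hv
    have hv : v q = 0 := by omega
    by_cases h : 0 ≤ v p
    · exact ⟨1, one_mem _, by simpa using h, by simpa using hv, by simp⟩
    · refine ⟨s * s, mul_mem hs hs, ?_⟩
      rw [mat_mul, ← vecMul_vecMul]
      obtain ⟨a, b, c⟩ := hs' (v ᵥ* s.mat)
      obtain ⟨a', b', c'⟩ := hs' v
      refine ⟨?_, ?_, fun j h1 h2 => by rw [c j h1 h2, c' j h1 h2]⟩
      · rw [a, b']; omega
      · rw [b, a', hv]; rfl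
  | succ n ih =>
    intro v hv
    by_cases h0 : v q = 0
    · exact ih v (by omega)
    obtain ⟨a, b, c⟩ := hs' (v ᵥ* (E q p (-(v p / v q))).mat)
    obtain ⟨g, hg, h1, h2, h3⟩ := ih (v ᵥ* (E q p (-(v p / v q)) * s).mat) (by
      rw [mat_mul, ← vecMul_vecMul, b, vecMul_E hpq.symm]
      simp only [Function.update_self]
      have e : v p + -(v p / v q) * v q = v p % v q := by
        have := Int.emod_add_mul_ediv (v p) (v q); linarith
      rw [e]
      have h1 := Int.emod_lt_abs (v p) h0
      have h2 := Int.emod_nonneg (v p) h0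
      rw [Int.abs_eq_natAbs] at h1
      omega)
    refine ⟨E q p (-(v p / v q)) * s * g, mul_mem (mul_mem (E_mem hq hp hpq.symm _) hs) hg, ?_⟩
    rw [mat_mul, ← vecMul_vecMul]
    refine ⟨h1, h2, fun j hj hj' => ?_⟩
    rw [h3 j hj hj', mat_mul, ← vecMul_vecMul, c j hj hj', vecMul_E hpq.symm]
    simp [hj]

lemma EE_reduce {T : Finset ι} {p : ι} (hp : p ∈ T) (v : ι → ℤ) (U : Finset ι) (hU : U ⊆ T)
    (hpU : p ∉ U) : ∃ g ∈ EE T, (U.Nonempty → 0 ≤ (v ᵥ* g.mat) p) ∧ (∀ j ∈ U, (v ᵥ* g.mat) j = 0) ∧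
      ∀ j, j ≠ p → j ∉ U → (v ᵥ* g.mat) j = v j := by
  induction U using Finset.induction_on with
  | empty => exact ⟨1, one_mem _, by simp⟩
  | insert q U hq ih =>
    obtain ⟨g, hg, h1, h2, h3⟩ := ih (fun x hx => hU (Finset.mem_insert_of_mem hx))
      (fun h => hpU (Finset.mem_insert_of_mem h))
    have hpq : p ≠ q := fun h => hpU (h ▸ Finset.mem_insert_self _ _)
    obtain ⟨g', hg', h1', h2', h3'⟩ := EE_euclid hp (hU (Finset.mem_insert_self q U)) hpq _
      (v ᵥ* g.mat) le_rfl
    refine ⟨g * g', mul_mem hg hg', ?_⟩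
    rw [mat_mul, ← vecMul_vecMul]
    refine ⟨fun _ => h1', fun j hj => ?_, fun j hj hj' => ?_⟩
    · by_cases hjq : j = q
      · subst hjq; exact h2'
      · have hjU : j ∈ U := (Finset.mem_insert.1 hj).resolve_left hjq
        rw [h3' j (fun h => hpU (h ▸ hj)) hjq, h2 j hjU]
    · rw [Finset.mem_insert, not_or] at hj'
      rw [h3' j hj hj'.1, h3 j hj hj'.2]

lemma EE_mono {T T' : Finset ι} (h : T ⊆ T') : EE T ≤ EE T' := by
  apply Subgroup.closure_mono
  rintro g ⟨i, hi, j, hj, c, hij, rfl⟩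
  exact ⟨i, h hi, j, h hj, c, hij, rfl⟩

/-- clearing a column -/
lemma clear_col {m : ℤ} {p : ι} {K : Subgroup (SpecialLinearGroup ι ℤ)}
    (hK : ∀ i, i ≠ p → ∀ k, m ∣ k → E i p k ∈ K) (B : SpecialLinearGroup ι ℤ)
    (hrow : (Pi.single p 1 : ι → ℤ) ᵥ* B.mat = Pi.single p 1) (hm : ∀ i, i ≠ p → m ∣ B.mat i p) :
    ∃ h ∈ K, (Pi.single p 1 : ι → ℤ) ᵥ* (h * B).mat = Pi.single p 1 ∧
      (h * B).mat *ᵥ (Pi.single p 1 : ι → ℤ) = Pi.single p 1 ∧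
      (∀ i j, j ≠ p → (h * B).mat i j = B.mat i j) := by
  set x : ι → ℤ := Pi.single p 1 - B.mat *ᵥ Pi.single p 1 with hx
  have hpp : B.mat p p = 1 := by simpa using congrFun hrow p
  have hxp : x p = 0 := by simp [hx, hpp]
  have ho : (Pi.single p 1 : ι → ℤ) ⬝ᵥ x = 0 := by simp [hxp]
  have hmem : TT x (Pi.single p 1) ∈ K := by
    refine mem_of_E_left hK x hxp fun i => ?_
    by_cases hi : i = p
    · subst hi; rw [hxp]; exact dvd_zero _
    · simp [hx, hi, hm i hi]
  refine ⟨_, hmem, ?_, ?_, ?_⟩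
  · rw [mat_mul, ← vecMul_vecMul, vecMul_TT ho, ho, zero_smul, add_zero, hrow]
  · rw [mat_mul, ← mulVec_mulVec, TT_mulVec ho, dotProduct_mulVec, hrow]
    simp [hx]
  · intro i j hj
    rw [mat_mul, TT_coe ho, add_mul, one_mul, vecMulVec_mul, hrow]
    simp [vecMulVec_apply, hj]

lemma unit_of_row {B : SpecialLinearGroup ι ℤ} {p : ι} (h : ∀ j, j ≠ p → B.mat p j = 0) :
    B.mat p p * (B⁻¹).mat p p = 1 := by
  have := congrFun (congrFun (mul_inv_coe B) p) p
  rw [mul_apply, Finset.sum_eq_single p] at this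
  · simpa using this
  · intro j _ hj; rw [h j hj, zero_mul]
  · simp

lemma mem_EE_of_fix (T : Finset ι) : ∀ A : SpecialLinearGroup ι ℤ,
    (∀ i j, (i ∉ T ∨ j ∉ T) → A.mat i j = (1 : Matrix ι ι ℤ) i j) →
    A ∈ EE (Finset.univ : Finset ι) := by
  induction T using Finset.induction_on with
  | empty =>
    intro A hA
    have : A = 1 := mat_inj (by ext i j; rw [hA i j (by simp)]; rfl)
    rw [this]; exact one_mem _
  | insert p T hp ih =>
    intro A hA
    obtain ⟨g, hg, h1, h2, h3⟩ := EE_reduce (Finset.mem_insert_self p T) (A.mat p) T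
      (Finset.subset_insert p T) hp
    have hrow' : (A * g).mat p = A.mat p ᵥ* g.mat := by
      rw [mat_mul]; ext k; rfl
    have hz : ∀ j, j ≠ p → (A * g).mat p j = 0 := by
      intro j hj
      rw [hrow']
      by_cases hjT : j ∈ T
      · exact h2 j hjT
      · rw [h3 j hj hjT, hA p j (by right; simp [hj, hjT])]
        simp [hj.symm]
    have hrowi : ∀ i, i ∉ insert p T → ∀ j, (A * g).mat i j = (1 : Matrix ι ι ℤ) i j := by
      intro i hi j
      have e : (A * g).mat i = A.mat i ᵥ* g.mat := by
        rw [mat_mul]; ext k; rfl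
      have e2 : A.mat i = Pi.single i 1 := by
        ext k; rw [hA i k (Or.inl hi)]; simp [one_apply, Pi.single_apply, eq_comm]
      rw [e, e2, EE_vecMul_single hi hg]; simp [one_apply, Pi.single_apply, eq_comm]
    have hcolj : ∀ j, j ∉ insert p T → ∀ i, (A * g).mat i j = (1 : Matrix ι ι ℤ) i j := by
      intro j hj i
      have e2 : A.mat *ᵥ Pi.single j 1 = Pi.single j 1 := by
        ext k; simp [hA k j (Or.inr hj), one_apply, Pi.single_apply]
      have e : (A * g).mat *ᵥ Pi.single j 1 = Pi.single j 1 := by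
        rw [mat_mul, ← mulVec_mulVec, EE_mulVec_single hj hg, e2]
      simpa [one_apply, Pi.single_apply] using congrFun e i
    rcases T.eq_empty_or_nonempty with hT | hT
    · subst hT
      have e : A.mat = diagonal (Function.update 1 p (A.mat p p)) := by
        ext i j
        by_cases hi : i = p
        · by_cases hj : j = p
          · subst hi hj; simp
          · rw [hA i j (by simp [hj])]
            subst hi
            simp [Ne.symm hj]
        · rw [hA i j (by simp [hi])]
          simp [one_apply, diagonal_apply, hi]
      have hd := det_mat A
      rw [e, det_diagonal, Finset.prod_update_of_mem (Finset.mem_univ p)] at hd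
      have hd' : A.mat p p = 1 := by simpa using hd
      have : A = 1 := mat_inj (by rw [e, hd']; simp)
      rw [this]; exact one_mem _
    have hpp : (A * g).mat p p = 1 := by
      have h0 : 0 ≤ (A * g).mat p p := by rw [hrow']; exact h1 hT
      have := unit_of_row hz
      exact Int.eq_one_of_mul_eq_one_right h0 this
    have hrow : (Pi.single p 1 : ι → ℤ) ᵥ* (A * g).mat = Pi.single p 1 := by
      ext j
      by_cases hj : j = p
      · subst hj; simpa using hpp
      · simpa [hj] using hz j hj
    obtain ⟨h, hh, e1, e2, e3⟩ := clear_col (m := 1) (K := EE (Finset.univ : Finset ι))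
      (fun i hi k _ => E_mem (Finset.mem_univ _) (Finset.mem_univ _) hi k) (A * g) hrow
      (fun _ _ => one_dvd _)
    have hC : h * (A * g) ∈ EE (Finset.univ : Finset ι) := by
      apply ih
      intro i j hij
      by_cases hj : j = p
      · subst hj
        have := congrFun e2 i
        rw [mulVec_single_one] at this
        simpa [one_apply, Pi.single_apply] using this
      by_cases hi : i = p
      · subst hi
        have := congrFun e1 j
        rw [single_one_vecMul] at this
        simpa [one_apply, Pi.single_apply, eq_comm] using this
      rw [e3 i j hj]
      rcases hij with h | h
      · exact hrowi i (by simp [hi, h]) j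
      · exact hcolj j (by simp [hj, h]) i
    have hg' := EE_mono (Finset.subset_univ _) hg
    rw [Subgroup.mul_mem_cancel_left _ hh, Subgroup.mul_mem_cancel_right _ hg'] at hC
    exact hC

lemma EE_top : EE (Finset.univ : Finset ι) = ⊤ :=
  eq_top_iff.2 fun A _ => mem_EE_of_fix Finset.univ A (by simp)

/-- A subgroup containing all elementary matrices is everything. -/
lemma eq_top_of_E {K : Subgroup (SpecialLinearGroup ι ℤ)} (h : ∀ i j c, i ≠ j → E i j c ∈ K) :
    K = ⊤ := by
  rw [eq_top_iff, ← EE_top, EE, Subgroup.closure_le]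
  rintro g ⟨i, -, j, -, c, hij, rfl⟩
  exact h i j c hij

/-! ### Noncentral normal subgroups contain elementary matrices -/

lemma exists_orth (h3 : 3 ≤ Fintype.card ι) (u : ι → ℤ) (i : ι) :
    ∃ x : ι → ℤ, x ≠ 0 ∧ x i = 0 ∧ u ⬝ᵥ x = 0 := by
  obtain ⟨a, b, ha, hb, hab⟩ : ∃ a b : ι, a ≠ i ∧ b ≠ i ∧ a ≠ b := by
    have : 1 < (Finset.univ.erase i).card := by
      rw [Finset.card_erase_of_mem (Finset.mem_univ i), Finset.card_univ]; omega
    obtain ⟨a, b, ha, hb, hab⟩ := Finset.one_lt_card_iff.1 this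
    exact ⟨a, b, Finset.ne_of_mem_erase ha, Finset.ne_of_mem_erase hb, hab⟩
  by_cases hu : u a = 0
  · exact ⟨Pi.single a 1, by simp, by simp [ha.symm], by simp [hu]⟩
  · refine ⟨Pi.single a (u b) - Pi.single b (u a), fun h => hu ?_, ?_, ?_⟩
    · simpa [hab.symm] using congrFun h b
    · simp [ha.symm, hb.symm]
    · simp [mul_comm]

variable {N : Subgroup (SpecialLinearGroup ι ℤ)}

open scoped commutatorElement

lemma comm_mem [hN : N.Normal] {g : SpecialLinearGroup ι ℤ} (hg : g ∈ N)
    (h : SpecialLinearGroup ι ℤ) : h * g * h⁻¹ * g⁻¹ ∈ N :=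
  mul_mem (hN.conj_mem g hg h) (inv_mem hg)

lemma comm_mem' [hN : N.Normal] {g : SpecialLinearGroup ι ℤ} (hg : g ∈ N)
    (h : SpecialLinearGroup ι ℤ) : g * h * g⁻¹ * h⁻¹ ∈ N := by
  have := mul_mem hg (hN.conj_mem _ (inv_mem hg) h)
  simpa [mul_assoc] using this

lemma inv_vecMul_of_fix {g : SpecialLinearGroup ι ℤ} {w : ι → ℤ} (h : w ᵥ* g.mat = w) :
    w ᵥ* (g⁻¹).mat = w := by
  conv_lhs => rw [← h]
  rw [vecMul_vecMul, mul_inv_coe, vecMul_one]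

lemma inv_mulVec_of_fix {g : SpecialLinearGroup ι ℤ} {w : ι → ℤ} (h : g.mat *ᵥ w = w) :
    (g⁻¹).mat *ᵥ w = w := by
  conv_lhs => rw [← h]
  rw [mulVec_mulVec, inv_coe_mul, one_mulVec]

lemma exists_minor {x y : ι → ℤ} (hx : x ≠ 0) (hy : y ≠ 0) :
    (∃ q : ι → ℤ, q ⬝ᵥ x = 0 ∧ q ⬝ᵥ y ≠ 0) ∨ (∃ a b : ℤ, a ≠ 0 ∧ b ≠ 0 ∧ a • x = b • y) := by
  obtain ⟨i, hi⟩ := Function.ne_iff.1 hx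
  by_cases h : ∀ j, x i * y j = y i * x j
  · right
    refine ⟨y i, x i, fun h0 => hy ?_, hi, ?_⟩
    · ext j
      have := h j
      rw [h0, zero_mul] at this
      exact (mul_eq_zero.1 this).resolve_left hi
    · ext j; simp [h j]
  · left
    push Not at h
    obtain ⟨j, hj⟩ := h
    refine ⟨Pi.single j (x i) - Pi.single i (x j), ?_, ?_⟩
    · simp [mul_comm]
    · simp only [sub_dotProduct, single_dotProduct]
      intro h; apply hj; linarith

lemma move_left [hN : N.Normal] {y w : ι → ℤ} (h : y ∈ XX N w) (hy : y ≠ 0)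
    {x : ι → ℤ} (hx : x ≠ 0) (hwx : w ⬝ᵥ x = 0) : ∃ c : ℤ, c ≠ 0 ∧ c • x ∈ XX N w := by
  rcases exists_minor hx hy with ⟨q, hq, hq'⟩ | ⟨a, b, ha, hb, hab⟩
  · refine ⟨q ⬝ᵥ y, hq', ?_⟩
    have hw : w ᵥ* (TT x q).mat = w := by rw [vecMul_TT hq, hwx]; simp
    have h1 := hN.conj_mem _ h.2 (TT x q)
    rw [TT_conj _ h.1, inv_vecMul_of_fix hw, TT_mulVec hq] at h1
    have h2 : y + (q ⬝ᵥ y) • x ∈ XX N w := ⟨by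
      rw [dotProduct_add, h.1, dotProduct_smul, hwx]; simp, h1⟩
    simpa using sub_mem h2 h
  · exact ⟨a, ha, hab ▸ zsmul_mem h b⟩

lemma move_right [hN : N.Normal] {y w : ι → ℤ} (h : w ∈ YY N y) (hw : w ≠ 0)
    {q : ι → ℤ} (hq : q ≠ 0) (hqy : q ⬝ᵥ y = 0) : ∃ c : ℤ, c ≠ 0 ∧ c • q ∈ YY N y := by
  rcases exists_minor hq hw with ⟨x, hx, hx'⟩ | ⟨a, b, ha, hb, hab⟩
  · rw [dotProduct_comm] at hx hx'
    refine ⟨w ⬝ᵥ x, hx', ?_⟩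
    have hy : (TT x q).mat *ᵥ y = y := by rw [TT_mulVec hx, hqy]; simp
    have h1 := hN.conj_mem _ h.2 (TT x q)⁻¹
    rw [TT_conj _ h.1, inv_mulVec_of_fix hy, inv_inv, vecMul_TT hx] at h1
    have h2 : w + (w ⬝ᵥ x) • q ∈ YY N y := ⟨by
      rw [add_dotProduct, h.1, smul_dotProduct, hqy]; simp, h1⟩
    simpa using sub_mem h2 h
  · exact ⟨a, ha, hab ▸ zsmul_mem h b⟩

lemma exists_E_of_TT [hN : N.Normal] (h3 : 3 ≤ Fintype.card ι) {y w : ι → ℤ}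
    (h : y ∈ XX N w) (hy : y ≠ 0) (hw : w ≠ 0) (i j : ι) (hij : i ≠ j) :
    ∃ c : ℤ, c ≠ 0 ∧ E i j c ∈ N := by
  obtain ⟨x, hx, hxj, hwx⟩ := exists_orth h3 w j
  obtain ⟨c, hc, hcx⟩ := move_left h hy hx hwx
  have hjx : (Pi.single j 1 : ι → ℤ) ⬝ᵥ (c • x) = 0 := by
    rw [dotProduct_smul]; simp [hxj]
  obtain ⟨d, hd, hdx⟩ := move_right (N := N) (y := c • x) (w := w) ⟨hcx.1, hcx.2⟩ hw
    (q := Pi.single j 1) (by simp) hjx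
  have h4 : d • (c • x) ∈ XX N (Pi.single j 1) := ⟨by rw [dotProduct_smul, hjx, smul_zero],
    by rw [TT_smul_comm]; exact hdx.2⟩
  obtain ⟨e, he, hex⟩ := move_left h4 (smul_ne_zero hd (smul_ne_zero hc hx))
    (x := Pi.single i 1) (by simp) (by simp [hij])
  exact ⟨e, he, hex.2⟩

lemma exists_TT_of_fix [hN : N.Normal] {H : SpecialLinearGroup ι ℤ} (hH : H ∈ N) (h1 : H ≠ 1)
    {w : ι → ℤ} (hw : w ≠ 0) (hfix : w ᵥ* H.mat = w) : ∃ y, y ≠ 0 ∧ y ∈ XX N w := by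
  by_cases hx : ∃ x, w ⬝ᵥ x = 0 ∧ H.mat *ᵥ x ≠ x
  · obtain ⟨x, hwx, hx⟩ := hx
    have horth : w ⬝ᵥ (H.mat *ᵥ x) = 0 := by rw [dotProduct_mulVec, hfix, hwx]
    refine ⟨H.mat *ᵥ x - x, sub_ne_zero.2 hx, by rw [dotProduct_sub, horth, hwx, sub_zero], ?_⟩
    have := comm_mem' hH (TT x w)
    rw [TT_conj _ hwx, inv_vecMul_of_fix hfix, ← TT_neg_left hwx,
      ← TT_add_left horth (by simp [hwx]), ← sub_eq_add_neg] at this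
    exact this
  · push Not at hx
    obtain ⟨k, hk⟩ := Function.ne_iff.1 hw
    have hk : w k ≠ 0 := hk
    set z : ι → ℤ := H.mat *ᵥ Pi.single k 1 - Pi.single k 1 with hz
    have hwz : w ⬝ᵥ z = 0 := by rw [hz, dotProduct_sub, dotProduct_mulVec, hfix, sub_self]
    -- `w k • (H - 1) = z wᵀ`
    have key : w k • (H.mat - 1) = vecMulVec z w := by
      ext i j
      have := hx (Pi.single j (w k) - Pi.single k (w j)) (by simp [mul_comm])
      have e1 : (Pi.single j (w k) : ι → ℤ) = w k • Pi.single j 1 := by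
        ext l; simp [Pi.single_apply]
      have e2 : (Pi.single k (w j) : ι → ℤ) = w j • Pi.single k 1 := by
        ext l; simp [Pi.single_apply]
      rw [e1, e2, mulVec_sub, mulVec_smul, mulVec_smul] at this
      have := congrFun this i
      simp only [Pi.sub_apply, Pi.smul_apply, smul_eq_mul, mulVec_single_one, col_apply] at this
      simp only [Matrix.smul_apply, Matrix.sub_apply, vecMulVec_apply, hz, Pi.sub_apply,
        mulVec_single_one, col_apply, smul_eq_mul, one_apply]
      simp only [Pi.single_apply] at this ⊢
      linarith
    have hzne : z ≠ 0 := by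
      intro h0
      rw [h0, zero_vecMulVec] at key
      have := (smul_eq_zero.1 key).resolve_left hk
      exact h1 (mat_inj (by rw [mat_one]; exact sub_eq_zero.1 this))
    refine ⟨w k • z, smul_ne_zero hk hzne, by rw [dotProduct_smul, hwz, smul_zero], ?_⟩
    have hsq : (H.mat - 1) * (H.mat - 1) = 0 := by
      have : (w k * w k) • ((H.mat - 1) * (H.mat - 1)) = 0 := by
        rw [← smul_mul_smul_comm, key, vecMulVec_mul_vecMulVec, hwz]; simp
      exact (smul_eq_zero.1 this).resolve_left (mul_ne_zero hk hk)
    have hpow : ∀ n : ℕ, (H ^ n).mat = 1 + (n : ℤ) • (H.mat - 1) := by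
      intro n
      induction n with
      | zero => simp
      | succ n ih =>
        rw [pow_succ, mat_mul, ih]
        have e : H.mat = 1 + (H.mat - 1) := by abel
        generalize H.mat - 1 = D at *
        rw [e]
        rw [add_mul, mul_add, smul_mul_assoc, mul_add, hsq]
        simp only [one_mul, mul_one, add_zero]
        push_cast
        rw [add_smul, one_smul]; abel
    -- use the natural exponent `(w k)^2`
    have : TT (w k • z) w = H ^ ((w k * w k).natAbs) := by
      apply mat_inj
      rw [hpow, TT_coe (by rw [dotProduct_smul, hwz, smul_zero]), smul_vecMulVec, ← key, smul_smul]
      rw [Int.natCast_natAbs, abs_mul_self]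
    rw [this]
    exact pow_mem hH _

lemma exists_m [hN : N.Normal] (h3 : 3 ≤ Fintype.card ι)
    (hc : ¬ N ≤ Subgroup.center (SpecialLinearGroup ι ℤ)) :
    ∃ m : ℤ, m ≠ 0 ∧ ∀ i j k, i ≠ j → m ∣ k → E i j k ∈ N := by
  obtain ⟨A, hA, hAc⟩ := SetLike.not_le_iff_exists.1 hc
  have hex : ∃ i j c, i ≠ j ∧ E i j c ∉ Subgroup.centralizer {A} := by
    by_contra! hcon
    have := eq_top_of_E hcon
    apply hAc
    rw [Subgroup.mem_center_iff]
    intro g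
    have hg : g ∈ Subgroup.centralizer {A} := this ▸ Subgroup.mem_top g
    exact (Subgroup.mem_centralizer_iff.1 hg A rfl).symm
  obtain ⟨i, j, c, hij, hnc⟩ := hex
  obtain ⟨w, hw, hwi, hwu⟩ := exists_orth h3 (A.mat *ᵥ Pi.single i 1) i
  have hH : A * E i j c * A⁻¹ * (E i j c)⁻¹ ∈ N := comm_mem' hA _
  have hH1 : A * E i j c * A⁻¹ * (E i j c)⁻¹ ≠ 1 := by
    intro h
    apply hnc
    rw [Subgroup.mem_centralizer_iff]
    rintro _ rfl
    rwa [mul_inv_eq_one, mul_inv_eq_iff_eq_mul] at h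
  have hE : ∀ v : ι → ℤ, v i = 0 → v ᵥ* (E i j c).mat = v := by
    intro v hv; rw [vecMul_E hij, hv]; simp
  have hfix : w ᵥ* (A * E i j c * A⁻¹ * (E i j c)⁻¹).mat = w := by
    simp only [mat_mul, ← vecMul_vecMul]
    rw [hE (w ᵥ* A.mat), vecMul_vecMul w, mul_inv_coe, vecMul_one, inv_vecMul_of_fix (hE w hwi)]
    rw [dotProduct_comm, dotProduct_mulVec] at hwu
    simpa using hwu
  obtain ⟨y, hy, hyX⟩ := exists_TT_of_fix hH hH1 hw hfix
  choose f hf using fun p : {p : ι × ι // p.1 ≠ p.2} =>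
    exists_E_of_TT h3 hyX hy hw p.1.1 p.1.2 p.2
  refine ⟨∏ p, f p, Finset.prod_ne_zero_iff.2 fun p _ => (hf p).1, ?_⟩
  intro a b k hab hk
  have hd : f ⟨(a, b), hab⟩ ∣ k := (Finset.dvd_prod_of_mem f (Finset.mem_univ _)).trans hk
  obtain ⟨e, rfl⟩ := hd
  have hm : (f ⟨(a, b), hab⟩ • Pi.single a 1 : ι → ℤ) ∈ XX N (Pi.single b 1) :=
    ⟨E_orth hab _, (hf ⟨(a, b), hab⟩).2⟩
  have := (zsmul_mem hm e).2
  rw [smul_smul, mul_comm] at this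
  exact this

/-! ### Centrality of the congruence subgroup modulo `N` -/

/-- Principal congruence subgroup. -/
def Gam (ι : Type*) [Fintype ι] [DecidableEq ι] (m : ℤ) : Subgroup (SpecialLinearGroup ι ℤ) :=
  (SpecialLinearGroup.map (Int.castRingHom (ZMod m.natAbs))).ker

instance (m : ℤ) : (Gam ι m).Normal := by unfold Gam; infer_instance

lemma mem_Gam {m : ℤ} {A : SpecialLinearGroup ι ℤ} :
    A ∈ Gam ι m ↔ ∀ i j, m ∣ A.mat i j - (1 : Matrix ι ι ℤ) i j := by
  have key : ∀ a b : ℤ, m ∣ a - b ↔ (a : ZMod m.natAbs) = b := by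
    intro a b
    rw [eq_comm, ZMod.intCast_eq_intCast_iff_dvd_sub, Int.natAbs_dvd]
  rw [Gam, MonoidHom.mem_ker]
  refine (Matrix.SpecialLinearGroup.ext_iff _ _).trans ?_
  refine forall_congr' fun i => forall_congr' fun j => ?_
  rw [key]
  have h1 : (SpecialLinearGroup.map (Int.castRingHom (ZMod m.natAbs)) A) i j
    = ((A.mat i j : ℤ) : ZMod m.natAbs) := rfl
  have h2 : (1 : SpecialLinearGroup ι (ZMod m.natAbs)) i j
    = (((1 : Matrix ι ι ℤ) i j : ℤ) : ZMod m.natAbs) := by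
    rw [Matrix.SpecialLinearGroup.coe_one]
    by_cases h : i = j <;> simp [one_apply, h]
  rw [h1, h2]

lemma Gam_ne {m : ℤ} {A : SpecialLinearGroup ι ℤ} (h : A ∈ Gam ι m) {i j : ι} (hij : i ≠ j) :
    m ∣ A.mat i j := by simpa [hij] using mem_Gam.1 h i j

lemma E_mem_Gam {m : ℤ} {i j : ι} (hij : i ≠ j) {k : ℤ} (hk : m ∣ k) : E i j k ∈ Gam ι m := by
  rw [mem_Gam]
  intro a b
  rw [E_coe hij, transvection]
  simp only [Matrix.add_apply, add_sub_cancel_left, Matrix.single_apply]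
  split_ifs
  · exact hk
  · exact dvd_zero _

/-- Elements central modulo `N`. -/
def ZZ (N : Subgroup (SpecialLinearGroup ι ℤ)) [N.Normal] : Subgroup (SpecialLinearGroup ι ℤ) :=
  (Subgroup.center (SpecialLinearGroup ι ℤ ⧸ N)).comap (QuotientGroup.mk' N)

instance [N.Normal] : (ZZ N).Normal := by unfold ZZ; infer_instance

lemma le_ZZ [N.Normal] : N ≤ ZZ N := by
  intro g hg
  rw [ZZ, Subgroup.mem_comap]
  have : QuotientGroup.mk' N g = 1 := by simpa using hg
  rw [this]; exact one_mem _

lemma comm_of_mem [N.Normal] {C g : SpecialLinearGroup ι ℤ} (h : C * g * C⁻¹ * g⁻¹ ∈ N) :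
    g ∈ (Subgroup.centralizer {QuotientGroup.mk' N C}).comap (QuotientGroup.mk' N) := by
  rw [Subgroup.mem_comap, Subgroup.mem_centralizer_iff]
  rintro _ rfl
  rw [← map_mul, ← map_mul, ← mul_inv_eq_one, ← map_inv, ← map_mul, _root_.mul_inv_rev, ← mul_assoc]
  exact (QuotientGroup.eq_one_iff _).2 h

lemma eq_top_of_E_star {K : Subgroup (SpecialLinearGroup ι ℤ)} (p : ι)
    (h1 : ∀ i c, i ≠ p → E i p c ∈ K) (h2 : ∀ i c, i ≠ p → E p i c ∈ K) : K = ⊤ := by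
  refine eq_top_of_E fun i j c hij => ?_
  by_cases hi : i = p
  · subst hi; exact h2 j c hij.symm
  by_cases hj : j = p
  · subst hj; exact h1 i c hij
  rw [← E_comm hi (Ne.symm hj) hij c, commutatorElement_def]
  have a := h1 i c hi
  have b := h2 j 1 hj
  exact mul_mem (mul_mem (mul_mem a b) (inv_mem a)) (inv_mem b)

section
variable [hN : N.Normal] {m : ℤ}

lemma central_block (hm : ∀ i j k, i ≠ j → m ∣ k → E i j k ∈ N)
    {C : SpecialLinearGroup ι ℤ} (hC : C ∈ Gam ι m) (p : ι)
    (hr : (Pi.single p 1 : ι → ℤ) ᵥ* C.mat = Pi.single p 1)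
    (hc : C.mat *ᵥ (Pi.single p 1 : ι → ℤ) = Pi.single p 1) : C ∈ ZZ N := by
  have htop : (Subgroup.centralizer {QuotientGroup.mk' N C}).comap (QuotientGroup.mk' N) = ⊤ := by
    apply eq_top_of_E_star p
    · intro i c hi
      apply comm_of_mem
      have e : (Pi.single p 1 : ι → ℤ) ⬝ᵥ C.mat *ᵥ c • Pi.single i 1 = 0 := by
        rw [dotProduct_mulVec, hr, E_orth hi]
      rw [E, TT_conj _ (E_orth hi c), inv_vecMul_of_fix hr, ← TT_neg_left (E_orth hi c),
        ← TT_add_left e (by rw [dotProduct_neg, E_orth hi, neg_zero])]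
      refine mem_of_E_left (m := m) (fun i hi k hk => hm i p k hi hk) _ ?_ ?_
      · have := E_orth hi c
        rw [single_dotProduct, one_mul] at e this
        rw [Pi.add_apply, Pi.neg_apply, e, this]; simp
      · intro l
        have e' : (C.mat *ᵥ c • Pi.single i 1 + -(c • Pi.single i 1) : ι → ℤ) l
            = c * (C.mat l i - (1 : Matrix ι ι ℤ) l i) := by
          rw [mulVec_smul]
          simp [mulVec_single_one, one_apply, Pi.single_apply]; split_ifs <;> ring
        rw [e']
        exact Dvd.dvd.mul_left (mem_Gam.1 hC l i) c
    · intro i c hi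
      apply comm_of_mem
      have o : (c • Pi.single i 1 : ι → ℤ) ⬝ᵥ (Pi.single p 1 : ι → ℤ) = 0 := by
        rw [dotProduct_comm]; exact E_orth hi c
      have e : ((c • Pi.single i 1 : ι → ℤ) ᵥ* (C⁻¹).mat) ⬝ᵥ (Pi.single p 1 : ι → ℤ) = 0 := by
        rw [← dotProduct_mulVec, inv_mulVec_of_fix hc, o]
      rw [E, TT_smul_comm, TT_conj _ o, hc, ← TT_neg_right o,
        ← TT_add_right e (by rw [neg_dotProduct, o, neg_zero])]
      refine mem_of_E_right (m := m) (fun i hi k hk => hm p i k hi.symm hk) _ ?_ ?_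
      · rw [dotProduct_single, mul_one] at e o
        rw [Pi.add_apply, Pi.neg_apply, e, o]; simp
      · intro l
        have e' : ((c • Pi.single i 1) ᵥ* (C⁻¹).mat + -(c • Pi.single i 1) : ι → ℤ) l
            = c * ((C⁻¹).mat i l - (1 : Matrix ι ι ℤ) i l) := by
          rw [smul_vecMul]
          simp [single_one_vecMul, one_apply, Pi.single_apply, eq_comm]; split_ifs <;> ring
        rw [e']
        exact Dvd.dvd.mul_left (mem_Gam.1 (inv_mem hC) i l) c
  rw [ZZ, Subgroup.mem_comap, Subgroup.mem_center_iff]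
  intro g
  obtain ⟨g, rfl⟩ := QuotientGroup.mk'_surjective N g
  have hg : g ∈ (Subgroup.centralizer {QuotientGroup.mk' N C}).comap (QuotientGroup.mk' N) :=
    htop ▸ Subgroup.mem_top g
  exact (Subgroup.mem_centralizer_iff.1 hg _ rfl).symm

lemma hmK (hm : ∀ i j k, i ≠ j → m ∣ k → E i j k ∈ N) :
    ∀ i j k, i ≠ j → m ∣ k → E i j k ∈ N ⊓ Gam ι m := fun i j k hij hk =>
  ⟨hm i j k hij hk, E_mem_Gam hij hk⟩

lemma central_one (hm : ∀ i j k, i ≠ j → m ∣ k → E i j k ∈ N)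
    {C : SpecialLinearGroup ι ℤ} (hC : C ∈ Gam ι m) (p : ι)
    (hpp : C.mat p p = 1) : C ∈ ZZ N := by
  have hK := hmK hm
  set w : ι → ℤ := (Pi.single p 1 : ι → ℤ) - C.mat p with hw
  have hwp : w p = 0 := by simp [hw, hpp]
  have ho : w ⬝ᵥ (Pi.single p 1 : ι → ℤ) = 0 := by simp [hwp]
  have hT : TT (Pi.single p 1) w ∈ N ⊓ Gam ι m := by
    refine mem_of_E_right (m := m) (fun i hi k hk => hK p i k hi.symm hk) _ hwp ?_
    intro i
    by_cases hi : i = p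
    · subst hi; rw [hwp]; exact dvd_zero _
    · simpa [hw, hi] using Gam_ne hC (Ne.symm hi)
  have hr : (Pi.single p 1 : ι → ℤ) ᵥ* (C * TT (Pi.single p 1) w).mat = Pi.single p 1 := by
    have e : (Pi.single p 1 : ι → ℤ) ᵥ* C.mat = C.mat p := single_one_vecMul _ _
    rw [mat_mul, ← vecMul_vecMul, e, vecMul_TT ho, dotProduct_single, hpp, hw]
    simp
  have hB : C * TT (Pi.single p 1) w ∈ Gam ι m := mul_mem hC hT.2
  obtain ⟨h, hh, e1, e2, -⟩ := clear_col (m := m) (K := N ⊓ Gam ι m)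
    (fun i hi k hk => hK i p k hi hk) _ hr (fun i hi => Gam_ne hB hi)
  have := central_block hm (mul_mem hh.2 hB) p e1 e2
  rwa [Subgroup.mul_mem_cancel_left _ (le_ZZ hh.1),
    Subgroup.mul_mem_cancel_right _ (le_ZZ hT.1)] at this

lemma central_two (hm : ∀ i j k, i ≠ j → m ∣ k → E i j k ∈ N)
    {A : SpecialLinearGroup ι ℤ} (hA : A ∈ Gam ι m) {p a b : ι} (hpa : p ≠ a)
    (hpb : p ≠ b) (hab : a ≠ b) (hz : ∀ j, j ≠ p → j ≠ b → A.mat p j = 0) : A ∈ ZZ N := by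
  have hK := hmK hm
  have hbez : A.mat p b * (A⁻¹).mat b p + A.mat p p * (A⁻¹).mat p p = 1 := by
    have := congrFun (congrFun (mul_inv_coe A) p) p
    rw [mul_apply, Finset.sum_eq_add_of_mem b p (Finset.mem_univ _) (Finset.mem_univ _) hpb.symm]
      at this
    · simpa using this
    · rintro j _ ⟨h1, h2⟩; rw [hz j h2 h1, zero_mul]
  obtain ⟨k, hk⟩ : m ∣ 1 - A.mat p p := by
    have := mem_Gam.1 hA p p
    rw [one_apply_eq] at this
    rw [← dvd_neg]; simpa using this
  set x : ι → ℤ := Pi.single b (m * k * (A⁻¹).mat b p) + Pi.single p (m * k * (A⁻¹).mat p p)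
    with hx
  have hxa : x a = 0 := by simp [hx, hab, hpa.symm]
  have ho : (Pi.single a 1 : ι → ℤ) ⬝ᵥ x = 0 := by simp [hxa]
  have hT : TT x (Pi.single a 1) ∈ N ⊓ Gam ι m := by
    refine mem_of_E_left (m := m) (fun i hi k hk => hK i a k hi hk) _ hxa ?_
    intro i
    simp only [hx, Pi.add_apply, Pi.single_apply, mul_assoc]
    refine dvd_add ?_ ?_ <;> split_ifs <;> simp
  have hB : A * TT x (Pi.single a 1) ∈ Gam ι m := mul_mem hA hT.2
  have hrow : (Pi.single p 1 : ι → ℤ) ᵥ* (A * TT x (Pi.single a 1)).mat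
      = A.mat p + (1 - A.mat p p) • Pi.single a 1 := by
    have e : (Pi.single p 1 : ι → ℤ) ᵥ* A.mat = A.mat p := single_one_vecMul _ _
    rw [mat_mul, ← vecMul_vecMul, e, vecMul_TT ho]
    congr 2
    rw [hx, dotProduct_add, dotProduct_single, dotProduct_single, hk]
    linear_combination (m * k) * hbez
  have hC := (inferInstance : (Gam ι m).Normal).conj_mem _ hB (E a p (-1))
  have hinv : (E a p (-1))⁻¹ = E a p 1 := by
    rw [E, ← TT_neg_left (E_orth hpa.symm _), E]; simp
  have hpp : (E a p (-1) * (A * TT x (Pi.single a 1)) * (E a p (-1))⁻¹).mat p p = 1 := by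
    have : (Pi.single p 1 : ι → ℤ) ᵥ*
        (E a p (-1) * (A * TT x (Pi.single a 1)) * (E a p (-1))⁻¹).mat =
        Function.update (A.mat p + (1 - A.mat p p) • Pi.single a 1) p 1 := by
      have e : (Pi.single p 1 : ι → ℤ) ᵥ* (E a p (-1)).mat = Pi.single p 1 := by
        rw [vecMul_E hpa.symm]; simp [hpa.symm]
      rw [hinv, mat_mul, mat_mul (E a p (-1)), ← vecMul_vecMul, ← vecMul_vecMul, e, hrow, vecMul_E hpa.symm]
      congr 1
      simp [hpa, hz a hpa.symm hab]
    have := congrFun this p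
    rw [single_one_vecMul] at this
    simpa using this
  have := central_one hm hC p hpp
  have h2 := (inferInstance : (ZZ N).Normal).conj_mem _ this (E a p (-1))⁻¹
  have h3 : A * TT x (Pi.single a 1) ∈ ZZ N := by
    convert h2 using 1; group
  rwa [Subgroup.mul_mem_cancel_right _ (le_ZZ hT.1)] at h3

lemma central_all (hm : ∀ i j k, i ≠ j → m ∣ k → E i j k ∈ N)
    (h3 : 3 ≤ Fintype.card ι) : Gam ι m ≤ ZZ N := by
  intro A hA
  obtain ⟨p, a, b, hpa, hpb, hab⟩ := Fintype.two_lt_card_iff.1 (by omega : 2 < Fintype.card ι)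
  obtain ⟨g, hg, -, h2, -⟩ := EE_reduce (T := Finset.univ.erase p) (p := b)
    (by simp [hpb.symm]) (A.mat p) ((Finset.univ.erase p).erase b) (Finset.erase_subset _ _)
    (by simp)
  have hC := (inferInstance : (Gam ι m).Normal).conj_mem _ hA g⁻¹
  have hr : (g⁻¹ * A * g⁻¹⁻¹).mat p = A.mat p ᵥ* g.mat := by
    have e := inv_vecMul_of_fix (EE_vecMul_single (p := p) (by simp) hg)
    have e2 : (Pi.single p 1 : ι → ℤ) ᵥ* A.mat = A.mat p := single_one_vecMul _ _
    have e3 : (Pi.single p 1 : ι → ℤ) ᵥ* (g⁻¹ * A * g⁻¹⁻¹).mat = (g⁻¹ * A * g⁻¹⁻¹).mat p :=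
      single_one_vecMul _ _
    rw [← e3, inv_inv, mat_mul, mat_mul, ← vecMul_vecMul, ← vecMul_vecMul, e, e2]
  have := central_two hm hC hpa hpb hab (fun j hj hjb => by
    rw [hr]; exact h2 j (by simp [hj, hjb]))
  have h4 := (inferInstance : (ZZ N).Normal).conj_mem _ this g
  convert h4 using 1; group

lemma finite_quot (hm : ∀ i j k, i ≠ j → m ∣ k → E i j k ∈ N)
    (hm0 : m ≠ 0) (h3 : 3 ≤ Fintype.card ι) :
    Finite (SpecialLinearGroup ι ℤ ⧸ N) := by
  set Q := SpecialLinearGroup ι ℤ ⧸ N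
  have hperf : commutator Q = ⊤ := by
    have : (commutator Q).comap (QuotientGroup.mk' N) = ⊤ := by
      apply eq_top_of_E
      intro i j c hij
      obtain ⟨l, hl⟩ : ∃ l, l ∉ ({i, j} : Finset ι) := by
        by_contra! h
        have h1 : (Finset.univ : Finset ι) ⊆ {i, j} := fun x _ => h x
        have h2 := (Finset.card_le_card h1).trans Finset.card_le_two
        rw [Finset.card_univ] at h2; omega
      simp only [Finset.mem_insert, Finset.mem_singleton, not_or] at hl
      rw [Subgroup.mem_comap, ← E_comm (Ne.symm hl.1) hl.2 hij c, map_commutatorElement]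
      exact Subgroup.commutator_mem_commutator (Subgroup.mem_top _) (Subgroup.mem_top _)
    rw [eq_top_iff]
    intro q _
    obtain ⟨g, rfl⟩ := QuotientGroup.mk'_surjective N q
    have : g ∈ (commutator Q).comap (QuotientGroup.mk' N) := this ▸ Subgroup.mem_top g
    exact this
  have : NeZero m.natAbs := ⟨by simpa using hm0⟩
  have hfi : (Gam ι m).FiniteIndex := by
    unfold Gam
    have : Finite (SpecialLinearGroup ι (ZMod m.natAbs)) := by
      unfold Matrix.SpecialLinearGroup; infer_instance
    infer_instance
  have hZ : (ZZ N).FiniteIndex := Subgroup.finiteIndex_of_le (central_all hm h3)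
  have hcen : (Subgroup.center Q).FiniteIndex := by
    constructor
    have := hZ.index_ne_zero
    rwa [ZZ, Subgroup.index_comap_of_surjective _ (QuotientGroup.mk'_surjective N)] at this
  have hfin : Finite (Q ⧸ Subgroup.center Q) := inferInstance
  have hset : (commutatorSet Q).Finite := by
    refine (Set.finite_range (fun z : (Q ⧸ Subgroup.center Q) × (Q ⧸ Subgroup.center Q) =>
      ⁅z.1.out, z.2.out⁆)).subset ?_
    rintro _ ⟨x, y, rfl⟩
    refine ⟨(x, y), ?_⟩
    obtain ⟨u, hu⟩ := QuotientGroup.mk_out_eq_mul (Subgroup.center Q) x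
    obtain ⟨v, hv⟩ := QuotientGroup.mk_out_eq_mul (Subgroup.center Q) y
    have hu' := fun g => (Subgroup.mem_center_iff.1 u.2 g)
    have hv' := fun g => (Subgroup.mem_center_iff.1 v.2 g)
    simp only [hu, hv, commutatorElement_def, _root_.mul_inv_rev]
    generalize (u : Q) = u at *
    generalize (v : Q) = v at *
    calc x * u * (y * v) * (u⁻¹ * x⁻¹) * (v⁻¹ * y⁻¹)
        = x * (u * (y * v)) * (u⁻¹ * x⁻¹) * (v⁻¹ * y⁻¹) := by group
      _ = x * ((y * v) * u) * (u⁻¹ * x⁻¹) * (v⁻¹ * y⁻¹) := by rw [← hu']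
      _ = x * y * (v * x⁻¹) * (v⁻¹ * y⁻¹) := by group
      _ = x * y * (x⁻¹ * v) * (v⁻¹ * y⁻¹) := by rw [← hv']
      _ = x * y * x⁻¹ * y⁻¹ := by group
  have := hset.to_subtype
  have hfc : Finite (commutator Q) := inferInstance
  rw [hperf] at hfc
  exact Finite.of_equiv _ (Subgroup.topEquiv (G := Q)).toEquiv

end

end SLNormal

theorem SL_normal_subgroup_central_or_finite_quotient
    (n : ℕ) (hn : 3 ≤ n) (N : Subgroup (Matrix.SpecialLinearGroup (Fin n) ℤ))
    [hN : N.Normal] :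
    (N ≤ Subgroup.center (Matrix.SpecialLinearGroup (Fin n) ℤ) ∧ Nat.card N ∣ 2) ∨
      Finite (Matrix.SpecialLinearGroup (Fin n) ℤ ⧸ N) := by
  by_cases hc : N ≤ Subgroup.center (Matrix.SpecialLinearGroup (Fin n) ℤ)
  · left
    refine ⟨hc, (Subgroup.card_dvd_of_le hc).trans ?_⟩
    have : Nonempty (Fin n) := ⟨⟨0, by omega⟩⟩
    rw [Nat.card_congr (Matrix.SpecialLinearGroup.center_equiv_rootsOfUnity'
      (n := Fin n) (R := ℤ) ⟨0, by omega⟩).toEquiv]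
    have h2 : Nat.card ℤˣ = 2 := by
      rw [Nat.card_eq_fintype_card]; rfl
    rw [← h2]
    exact Subgroup.card_subgroup_dvd_card _
  · right
    obtain ⟨m, hm0, hm⟩ := SLNormal.exists_m (by simpa using hn) hc
    exact SLNormal.finite_quot hm hm0 (by simpa using hn)
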